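/- For any initial graph function α and any infinite sequence of raising operations, the sequence of raising vectors r(t) is coordinatewise non-decreasing and bounded above, and hence converges to a limit vector r* as t → ∞. -/

import Mathlib

open Filter Topology

variable {V : Type*}

/-- Maximum weight of an edge leaving `v` (as a supremum over the finite edge set). -/
noncomputable def outMax (E : V → V → Prop) (α : V → V → ℝ) (v : V) : ℝ :=
  sSup {x : ℝ | ∃ w, E v w ∧ x = α v w}

/-- Maximum weight of an edge entering `v`. -/
noncomputable def inMax (E : V → V → Prop) (α : V → V → ℝ) (v : V) : ℝ :=
  sSup {x : ℝ | ∃ u, E u v ∧ x = α u v}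

/-- A graph function is balanced if the max outgoing weight equals the max incoming
weight at every vertex. -/
def IsBalancedGF (E : V → V → Prop) (α : V → V → ℝ) : Prop :=
  ∀ v, outMax E α v = inMax E α v

/-- Raising imbalance at `v`. -/
noncomputable def rhoR (E : V → V → Prop) (α : V → V → ℝ) (v : V) : ℝ :=
  max 0 (outMax E α v - inMax E α v)

/-- Lowering imbalance at `v`. -/
noncomputable def rhoL (E : V → V → Prop) (α : V → V → ℝ) (v : V) : ℝ :=
  max 0 (inMax E α v - outMax E α v)

/-- A balancing operation at `v`: add `(α_v^out − α_v^in)/2` to every edge entering `v`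
and subtract the same quantity from every edge leaving `v` (a self-loop is unchanged). -/
noncomputable def balanceAt [DecidableEq V] (E : V → V → Prop) (α : V → V → ℝ) (v : V) :
    V → V → ℝ :=
  fun a b =>
    α a b + (if b = v then (outMax E α v - inMax E α v) / 2 else 0)
          - (if a = v then (outMax E α v - inMax E α v) / 2 else 0)

/-- A raising operation at `v`: balance at `v` if the raising imbalance is positive,
otherwise do nothing. -/
noncomputable def raiseOp [DecidableEq V] (E : V → V → Prop) (α : V → V → ℝ) (v : V) :
    V → V → ℝ :=
  if 0 < rhoR E α v then balanceAt E α v else α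

/-- A lowering operation at `v`: balance at `v` if the lowering imbalance is positive,
otherwise do nothing. -/
noncomputable def lowerOp [DecidableEq V] (E : V → V → Prop) (α : V → V → ℝ) (v : V) :
    V → V → ℝ :=
  if 0 < rhoL E α v then balanceAt E α v else α

/-- A sequence of vertices is fair if every vertex appears infinitely often. -/
def Fair (σ : ℕ → V) : Prop := ∀ (v : V) (N : ℕ), ∃ t, N ≤ t ∧ σ t = v

/-- State after `t` raising operations along the sequence `σ`. -/
noncomputable def raiseIter [DecidableEq V] (E : V → V → Prop) (α : V → V → ℝ)
    (σ : ℕ → V) : ℕ → V → V → ℝ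
  | 0 => α
  | t + 1 => raiseOp E (raiseIter E α σ t) (σ t)

/-- State after `t` lowering operations along the sequence `σ`. -/
noncomputable def lowerIter [DecidableEq V] (E : V → V → Prop) (α : V → V → ℝ)
    (σ : ℕ → V) : ℕ → V → V → ℝ
  | 0 => α
  | t + 1 => lowerOp E (lowerIter E α σ t) (σ t)

/-- The raising vector: cumulative amount by which each vertex has been raised after
`t` raising operations along `σ`. -/
noncomputable def rvec [DecidableEq V] (E : V → V → Prop) (α : V → V → ℝ)
    (σ : ℕ → V) : ℕ → V → ℝ
  | 0 => fun _ => 0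
  | t + 1 => fun u =>
      rvec E α σ t u + (if u = σ t then rhoR E (raiseIter E α σ t) (σ t) / 2 else 0)

/-- State after performing raising operations along a finite list of vertices. -/
noncomputable def raiseList [DecidableEq V] (E : V → V → Prop) :
    (V → V → ℝ) → List V → V → V → ℝ
  | α, [] => α
  | α, v :: l => raiseList E (raiseOp E α v) l

/-- Raising vector accumulated along a finite list of raising operations. -/
noncomputable def rvecList [DecidableEq V] (E : V → V → Prop) :
    (V → V → ℝ) → List V → V → ℝ
  | _, [] => fun _ => 0
  | α, v :: l => fun u =>
      (if u = v then rhoR E α v / 2 else 0) + rvecList E (raiseOp E α v) l u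

/-- State after performing (unconditional) balancing operations along a list. -/
noncomputable def balList [DecidableEq V] (E : V → V → Prop) :
    (V → V → ℝ) → List V → V → V → ℝ
  | α, [] => α
  | α, v :: l => balList E (balanceAt E α v) l

/-- State after `t` balancing operations along the sequence `σ`. -/
noncomputable def balIter [DecidableEq V] (E : V → V → Prop) (α : V → V → ℝ)
    (σ : ℕ → V) : ℕ → V → V → ℝ
  | 0 => α
  | t + 1 => balanceAt E (balIter E α σ t) (σ t)

/-- Two graph functions are equivalent if their sums around every directed cycle agree. -/
def Equivalent (E : V → V → Prop) (α γ : V → V → ℝ) : Prop :=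
  ∀ (k : ℕ) (f : ZMod (k + 1) → V), (∀ i, E (f i) (f (i + 1))) →
    (∑ i, α (f i) (f (i + 1))) = ∑ i, γ (f i) (f (i + 1))

/-- The raising-balanced graph function determined by the limiting raising vector. -/
noncomputable def alphaR (α : V → V → ℝ) (rstar : V → ℝ) : V → V → ℝ :=
  fun u v => α u v + rstar v - rstar u

/-- Height of a vertex: `y_v = -r*_v`. -/
noncomputable def height (rstar : V → ℝ) (v : V) : ℝ := -rstar v

/-- Level of a vertex: maximum over incoming edges of `α^R`. -/
noncomputable def level (E : V → V → Prop) (α : V → V → ℝ) (rstar : V → ℝ) (v : V) : ℝ :=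
  inMax E (alphaR α rstar) v

/-- Momentum of a vertex: `m_v = max over edges (u,v) entering v of (α_{uv} − x_v)`. -/
noncomputable def momentum (E : V → V → Prop) (α : V → V → ℝ) (rstar : V → ℝ) (v : V) : ℝ :=
  sSup {c : ℝ | ∃ u, E u v ∧ c = α u v - level E α rstar v}

/-!
Raising is order-preserving in the raising vector. Hence if `p ≥ 0` is a potential for which every
raising imbalance of `α_{uv} + p_v - p_u` is at most `ε`, then `r(t) ≤ p + t ε / 2`, and it suffices
to find such potentials for every `ε > 0` within one fixed bound.

For a discount `γ < 1` let `x` be the fixed point of `x_v = max_u (α_{uv} + γ x_u)`. For the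
potential `-x` every edge leaving `v` has weight at most `(1 - γ) x_v`, while the edge `uv`
attaining the maximum has weight `(1 - γ) x_u`. With `A = ‖α‖` we have `(1 - γ) |x| ≤ A`, so
`|x_v - x_u| ≤ 2A` along the maximizing edge and the imbalance is at most `2 (1 - γ) A`. The range
of `x` may however blow up as `γ → 1`. Shrinking every gap between consecutive values of `x` to at
most `2A` bounds the range by `2A |V|`. It does not affect the maximizing edges, and no edge
decreases `x` by more than `2A`, so the only edges it affects go up in `x`; their weight becomes at
most `A - 2A ≤ (1 - γ) x_v`. Now let `γ → 1`.
-/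

open MeasureTheory Set

section Maxima

variable [Finite V] {E : V → V → Prop} {α β : V → V → ℝ} {u v : V}

theorem isGreatest_inMax (α : V → V → ℝ) (h : ∃ u, E u v) :
    IsGreatest {x : ℝ | ∃ u, E u v ∧ x = α u v} (inMax E α v) := by
  have hfin : {x : ℝ | ∃ u, E u v ∧ x = α u v}.Finite :=
    (finite_range fun u => α u v).subset fun _ ⟨u, _, hx⟩ => ⟨u, hx.symm⟩
  obtain ⟨u, hu⟩ := h
  exact ⟨Nonempty.csSup_mem ⟨_, u, hu, rfl⟩ hfin, fun _ hx => le_csSup hfin.bddAbove hx⟩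

theorem exists_inMax_eq (α : V → V → ℝ) (h : ∃ u, E u v) : ∃ u, E u v ∧ inMax E α v = α u v :=
  (isGreatest_inMax α h).1

theorem le_inMax (α : V → V → ℝ) (h : E u v) : α u v ≤ inMax E α v :=
  (isGreatest_inMax α ⟨u, h⟩).2 ⟨u, h, rfl⟩

theorem exists_outMax_eq (α : V → V → ℝ) (h : ∃ w, E v w) : ∃ w, E v w ∧ outMax E α v = α v w :=
  exists_inMax_eq (E := flip E) (flip α) h

theorem inMax_le_inMax_add {c : ℝ} (h : ∃ u, E u v) (hc : ∀ u, E u v → α u v ≤ β u v + c) :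
    inMax E α v ≤ inMax E β v + c := by
  obtain ⟨u, huv, hu⟩ := exists_inMax_eq α h
  linarith [hc u huv, le_inMax β huv]

theorem outMax_le_outMax_add {c : ℝ} (h : ∃ w, E v w) (hc : ∀ w, E v w → α v w ≤ β v w + c) :
    outMax E α v ≤ outMax E β v + c :=
  inMax_le_inMax_add (E := flip E) (α := flip α) (β := flip β) h hc

end Maxima

section Potentials

theorem rhoR_nonneg (E : V → V → Prop) (α : V → V → ℝ) (v : V) : 0 ≤ rhoR E α v :=
  le_max_left _ _

theorem outMax_sub_inMax_le_rhoR (E : V → V → Prop) (α : V → V → ℝ) (v : V) :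
    outMax E α v - inMax E α v ≤ rhoR E α v :=
  le_max_right _ _

theorem alphaR_zero (α : V → V → ℝ) : alphaR α 0 = α := by
  ext u v
  simp [alphaR]

theorem alphaR_alphaR (α : V → V → ℝ) (p q : V → ℝ) :
    alphaR (alphaR α p) q = alphaR α (p + q) := by
  ext u v
  simp only [alphaR, Pi.add_apply]
  ring

theorem alphaR_add_const (α : V → V → ℝ) (p : V → ℝ) (c : ℝ) :
    alphaR α (fun v => p v + c) = alphaR α p := by
  ext u v
  simp only [alphaR]
  ring

/-- Both sides are of the form `max (q v) ((max_w (α_{vw} + q w) - max_u (α_{uv} - q u)) / 2)`,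
which is monotone in `q`. -/
theorem add_half_rhoR_alphaR_mono [Finite V] {E : V → V → Prop} {v : V}
    (hout : ∃ w, E v w) (hin : ∃ u, E u v) (α : V → V → ℝ) {p q : V → ℝ} (hqp : q ≤ p) :
    q v + rhoR E (alphaR α q) v / 2 ≤ p v + rhoR E (alphaR α p) v / 2 := by
  have h_out : outMax E (alphaR α q) v ≤ outMax E (alphaR α p) v + (p v - q v) :=
    outMax_le_outMax_add hout fun w _ => by simp only [alphaR]; linarith [hqp w]
  have h_in : inMax E (alphaR α p) v ≤ inMax E (alphaR α q) v + (p v - q v) :=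
    inMax_le_inMax_add hin fun u _ => by simp only [alphaR]; linarith [hqp u]
  have h_imbalance : rhoR E (alphaR α q) v ≤ rhoR E (alphaR α p) v + 2 * (p v - q v) :=
    max_le (by linarith [rhoR_nonneg E (alphaR α p) v, hqp v])
      (by linarith [outMax_sub_inMax_le_rhoR E (alphaR α p) v])
  linarith

end Potentials

section Raising

variable [DecidableEq V]

theorem raiseOp_eq_alphaR_single (E : V → V → Prop) (α : V → V → ℝ) (v : V) :
    raiseOp E α v = alphaR α (Pi.single v (rhoR E α v / 2)) := by
  unfold raiseOp
  split_ifs with hpos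
  · have hρ : rhoR E α v = outMax E α v - inMax E α v :=
      max_eq_right (lt_max_iff.1 hpos |>.resolve_left (lt_irrefl 0)).le
    ext a b
    simp only [balanceAt, alphaR, Pi.single_apply, hρ]
  · have hρ : rhoR E α v = 0 := le_antisymm (not_lt.1 hpos) (rhoR_nonneg E α v)
    rw [hρ, zero_div, Pi.single_zero, alphaR_zero]

theorem rvec_succ (E : V → V → Prop) (α : V → V → ℝ) (σ : ℕ → V) (t : ℕ) :
    rvec E α σ (t + 1) =
      rvec E α σ t + Pi.single (σ t) (rhoR E (raiseIter E α σ t) (σ t) / 2) := by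
  ext v
  simp only [rvec, Pi.add_apply, Pi.single_apply]

theorem raiseIter_eq_alphaR_rvec (E : V → V → Prop) (α : V → V → ℝ) (σ : ℕ → V) (t : ℕ) :
    raiseIter E α σ t = alphaR α (rvec E α σ t) := by
  induction t with
  | zero => exact (alphaR_zero α).symm
  | succ t ih =>
    rw [rvec_succ, ← alphaR_alphaR, ← ih]
    exact raiseOp_eq_alphaR_single E _ _

theorem monotone_rvec (E : V → V → Prop) (α : V → V → ℝ) (σ : ℕ → V) : Monotone (rvec E α σ) := by
  refine monotone_nat_of_le_succ fun t => ?_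
  rw [rvec_succ]
  exact le_add_of_nonneg_right (Pi.single_nonneg.2 (div_nonneg (rhoR_nonneg E _ _) zero_le_two))

theorem rvec_le_add_mul_of_rhoR_alphaR_le [Finite V] {E : V → V → Prop}
    (hout : ∀ v, ∃ w, E v w) (hin : ∀ v, ∃ u, E u v) {α : V → V → ℝ} {p : V → ℝ} {ε : ℝ}
    (hp : ∀ v, 0 ≤ p v) (hρ : ∀ v, rhoR E (alphaR α p) v ≤ ε)
    (σ : ℕ → V) (t : ℕ) (v : V) : rvec E α σ t v ≤ p v + t * (ε / 2) := by
  induction t generalizing v with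
  | zero => simpa [rvec] using hp v
  | succ t ih =>
    rw [rvec_succ, Pi.add_apply, Pi.single_apply]
    push_cast
    split_ifs with h
    · rw [← h, raiseIter_eq_alphaR_rvec]
      have hmono := add_half_rhoR_alphaR_mono (hout v) (hin v) α ih
      rw [alphaR_add_const] at hmono
      linarith [hρ v]
    · linarith [ih v, rhoR_nonneg E (alphaR α p) v, hρ v]

end Raising

section TruncateGaps

variable {ι : Type*} {x : ι → ℝ} {D : ℝ} {i j : ι}

/-- The values of `x` with every gap between consecutive values shrunk to at most `D` (and the least
value moved to `0`), for `D ≥ 0`. It is encoded as the length of the part of `⋃ j, [x j, x j + D]`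
below `x i`. -/
noncomputable def truncateGaps (x : ι → ℝ) (D : ℝ) (i : ι) : ℝ :=
  volume.real ((⋃ j, Icc (x j) (x j + D)) ∩ Iic (x i))

theorem truncateGaps_nonneg (x : ι → ℝ) (D : ℝ) (i : ι) : 0 ≤ truncateGaps x D i :=
  measureReal_nonneg

theorem volume_iUnion_Icc_ne_top [Finite ι] (a b : ι → ℝ) : volume (⋃ j, Icc (a j) (b j)) ≠ ⊤ :=
  (isCompact_iUnion fun _ => isCompact_Icc).measure_ne_top

theorem truncateGaps_le [Fintype ι] (x : ι → ℝ) (hD : 0 ≤ D) (i : ι) :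
    truncateGaps x D i ≤ Fintype.card ι * D :=
  calc truncateGaps x D i
      ≤ volume.real (⋃ j, Icc (x j) (x j + D)) :=
        measureReal_mono inter_subset_left (volume_iUnion_Icc_ne_top _ _)
    _ ≤ ∑ j, volume.real (Icc (x j) (x j + D)) := measureReal_iUnion_fintype_le _
    _ = Fintype.card ι * D := by simp [hD]

variable [Finite ι]

theorem truncateGaps_sub (D : ℝ) (hij : x i ≤ x j) :
    truncateGaps x D j - truncateGaps x D i =
      volume.real ((⋃ k, Icc (x k) (x k + D)) ∩ Ioc (x i) (x j)) := by
  have hfin := volume_iUnion_Icc_ne_top x fun k => x k + D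
  rw [sub_eq_iff_eq_add', truncateGaps, ← Iic_union_Ioc_eq_Iic hij, inter_union_distrib_left]
  refine measureReal_union ?_ ?_ (measure_ne_top_of_subset inter_subset_left hfin)
    (measure_ne_top_of_subset inter_subset_left hfin)
  · exact (Iic_disjoint_Ioc le_rfl).mono inter_subset_right inter_subset_right
  · exact (MeasurableSet.iUnion fun _ => measurableSet_Icc).inter measurableSet_Ioc

theorem truncateGaps_sub_le (D : ℝ) (hij : x i ≤ x j) :
    truncateGaps x D j - truncateGaps x D i ≤ x j - x i := by
  rw [truncateGaps_sub D hij, ← Real.volume_real_Ioc_of_le hij]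
  exact measureReal_mono inter_subset_right measure_Ioc_lt_top.ne

theorem min_le_truncateGaps_sub (D : ℝ) (hij : x i ≤ x j) :
    min D (x j - x i) ≤ truncateGaps x D j - truncateGaps x D i := by
  have hsub : Ioc (x i) (min (x i + D) (x j)) ⊆
      (⋃ k, Icc (x k) (x k + D)) ∩ Ioc (x i) (x j) := fun s hs =>
    ⟨mem_iUnion.2 ⟨i, hs.1.le, hs.2.trans (min_le_left _ _)⟩, hs.1, hs.2.trans (min_le_right _ _)⟩
  calc min D (x j - x i)
      = min (x i + D) (x j) - x i := by rw [← min_sub_sub_right, add_sub_cancel_left]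
    _ ≤ volume.real (Ioc (x i) (min (x i + D) (x j))) := by
        rw [Real.volume_real_Ioc]
        exact le_max_left _ _
    _ ≤ truncateGaps x D j - truncateGaps x D i := by
        rw [truncateGaps_sub D hij]
        exact measureReal_mono hsub
          (measure_ne_top_of_subset inter_subset_right measure_Ioc_lt_top.ne)

theorem truncateGaps_sub_eq (hij : x i ≤ x j) (hD : x j - x i ≤ D) :
    truncateGaps x D j - truncateGaps x D i = x j - x i :=
  (truncateGaps_sub_le D hij).antisymm (min_eq_right hD ▸ min_le_truncateGaps_sub D hij)

theorem truncateGaps_sub_eq_of_abs_le (hD : |x j - x i| ≤ D) :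
    truncateGaps x D j - truncateGaps x D i = x j - x i := by
  obtain ⟨hij, hji⟩ := abs_le.1 hD
  rcases le_total (x i) (x j) with h | h
  · exact truncateGaps_sub_eq h hji
  · linarith [truncateGaps_sub_eq (D := D) h (by linarith)]

end TruncateGaps

section Discounted

variable {E : V → V → Prop} {α : V → V → ℝ} {γ : ℝ} {x : V → ℝ} {u v w : V}

/-- The discounted Bellman operator of `α`, whose value at `v` is the best weight of an edge `uv`
plus `γ` times the value of `x` at `u`. The potentials used to bound the raising vectors come from
its fixed point. -/
noncomputable def discountedInMax (E : V → V → Prop) (α : V → V → ℝ) (γ : ℝ) (x : V → ℝ) (v : V) :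
    ℝ :=
  inMax E (fun u w => α u w + γ * x u) v

theorem weight_add_mul_le_of_isFixedPt [Finite V]
    (hx : Function.IsFixedPt (discountedInMax E α γ) x) (huv : E u v) : α u v + γ * x u ≤ x v :=
  (le_inMax (fun u w => α u w + γ * x u) huv).trans_eq (congrFun hx v)

theorem exists_eq_weight_add_mul_of_isFixedPt [Finite V]
    (hx : Function.IsFixedPt (discountedInMax E α γ) x) (hin : ∃ u, E u v) :
    ∃ u, E u v ∧ x v = α u v + γ * x u := by
  obtain ⟨u, huv, hu⟩ := exists_inMax_eq (fun u w => α u w + γ * x u) hin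
  exact ⟨u, huv, (congrFun hx v).symm.trans hu⟩

theorem lipschitzWith_discountedInMax [Fintype V] (hin : ∀ v, ∃ u, E u v) (α : V → V → ℝ)
    (γ : NNReal) : LipschitzWith γ (discountedInMax E α γ) := by
  have hle (x y : V → ℝ) (v : V) :
      discountedInMax E α γ x v ≤ discountedInMax E α γ y v + γ * dist x y := by
    refine inMax_le_inMax_add (hin v) fun u _ => ?_
    have hu : x u - y u ≤ dist x y := (le_abs_self _).trans (dist_le_pi_dist x y u)
    linarith [mul_le_mul_of_nonneg_left hu γ.coe_nonneg]
  refine LipschitzWith.of_dist_le_mul fun x y => (dist_pi_le_iff (by positivity)).2 fun v => ?_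
  rw [Real.dist_eq, abs_sub_le_iff]
  constructor
  · linarith [hle x y v]
  · linarith [dist_comm x y ▸ hle y x v]

theorem exists_isFixedPt_discountedInMax [Finite V] (hin : ∀ v, ∃ u, E u v) (α : V → V → ℝ)
    (hγ₀ : 0 ≤ γ) (hγ₁ : γ < 1) : ∃ x, Function.IsFixedPt (discountedInMax E α γ) x := by
  cases nonempty_fintype V
  have hcontr : ContractingWith ⟨γ, hγ₀⟩ (discountedInMax E α γ) :=
    ⟨hγ₁, lipschitzWith_discountedInMax hin α ⟨γ, hγ₀⟩⟩
  exact ⟨_, hcontr.fixedPoint_isFixedPt⟩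

variable [Fintype V]

theorem abs_weight_le_norm (α : V → V → ℝ) (u v : V) : |α u v| ≤ ‖α‖ :=
  (norm_le_pi_norm (α u) v).trans (norm_le_pi_norm α u)

theorem abs_one_sub_mul_le_of_isFixedPt (hx : Function.IsFixedPt (discountedInMax E α γ) x)
    (hin : ∀ v, ∃ u, E u v) (hγ₀ : 0 ≤ γ) (hγ₁ : γ < 1) (v : V) : |(1 - γ) * x v| ≤ ‖α‖ := by
  have hγ : 0 ≤ 1 - γ := by linarith
  have hnorm : ‖x‖ ≤ ‖α‖ + γ * ‖x‖ := by
    refine (pi_norm_le_iff_of_nonneg (by positivity)).2 fun v => ?_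
    obtain ⟨u, -, hu⟩ := exists_eq_weight_add_mul_of_isFixedPt hx (hin v)
    calc ‖x v‖ ≤ ‖α u v‖ + ‖γ * x u‖ := hu ▸ norm_add_le _ _
      _ = |α u v| + γ * ‖x u‖ := by rw [norm_mul, Real.norm_of_nonneg hγ₀, Real.norm_eq_abs]
      _ ≤ ‖α‖ + γ * ‖x‖ := by
        gcongr
        exacts [abs_weight_le_norm α u v, norm_le_pi_norm x u]
  calc |(1 - γ) * x v| = (1 - γ) * ‖x v‖ := by rw [abs_mul, abs_of_nonneg hγ, Real.norm_eq_abs]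
    _ ≤ (1 - γ) * ‖x‖ := by gcongr; exact norm_le_pi_norm x v
    _ ≤ ‖α‖ := by linarith

theorem alphaR_neg_truncateGaps_le (hx : Function.IsFixedPt (discountedInMax E α γ) x)
    (hin : ∀ v, ∃ u, E u v) (hγ₀ : 0 ≤ γ) (hγ₁ : γ < 1) (hvw : E v w) :
    alphaR α (-truncateGaps x (2 * ‖α‖)) v w ≤ (1 - γ) * x v := by
  have hedge := weight_add_mul_le_of_isFixedPt hx hvw
  have hα := abs_le.1 (abs_weight_le_norm α v w)
  have hv := abs_le.1 (abs_one_sub_mul_le_of_isFixedPt hx hin hγ₀ hγ₁ v)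
  simp only [alphaR, Pi.neg_apply]
  rcases le_total (x v) (x w) with hle | hle
  · have hgap := min_le_truncateGaps_sub (2 * ‖α‖) hle
    rcases min_le_iff.1 hgap with hlong | hshort <;> linarith
  · have hgap := truncateGaps_sub_eq (D := 2 * ‖α‖) hle (by linarith)
    linarith

theorem rhoR_alphaR_neg_truncateGaps_le (hx : Function.IsFixedPt (discountedInMax E α γ) x)
    (hout : ∀ v, ∃ w, E v w) (hin : ∀ v, ∃ u, E u v) (hγ₀ : 0 ≤ γ) (hγ₁ : γ < 1) (v : V) :
    rhoR E (alphaR α (-truncateGaps x (2 * ‖α‖))) v ≤ (1 - γ) * (2 * ‖α‖) := by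
  set β := alphaR α (-truncateGaps x (2 * ‖α‖)) with hβ
  have hγ : 0 ≤ 1 - γ := by linarith
  obtain ⟨w, hvw, hw⟩ := exists_outMax_eq β (hout v)
  have h_out : outMax E β v ≤ (1 - γ) * x v :=
    hw.trans_le (alphaR_neg_truncateGaps_le hx hin hγ₀ hγ₁ hvw)
  obtain ⟨u, huv, hu⟩ := exists_eq_weight_add_mul_of_isFixedPt hx (hin v)
  have hdist : |x v - x u| ≤ 2 * ‖α‖ :=
    calc |x v - x u| = |α u v - (1 - γ) * x u| := by rw [hu]; ring_nf
      _ ≤ |α u v| + |(1 - γ) * x u| := abs_sub _ _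
      _ ≤ 2 * ‖α‖ := by
        linarith [abs_weight_le_norm α u v, abs_one_sub_mul_le_of_isFixedPt hx hin hγ₀ hγ₁ u]
  have h_in : (1 - γ) * x u ≤ inMax E β v := by
    refine le_trans (le_of_eq ?_) (le_inMax β huv)
    simp only [hβ, alphaR, Pi.neg_apply]
    linarith [truncateGaps_sub_eq_of_abs_le hdist]
  refine max_le (by positivity) ?_
  linarith [mul_le_mul_of_nonneg_left ((le_abs_self _).trans hdist) hγ]

theorem exists_potential_rhoR_alphaR_le (hout : ∀ v, ∃ w, E v w) (hin : ∀ v, ∃ u, E u v)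
    (α : V → V → ℝ) (hγ₀ : 0 ≤ γ) (hγ₁ : γ < 1) :
    ∃ p : V → ℝ, (∀ v, 0 ≤ p v ∧ p v ≤ Fintype.card V * (2 * ‖α‖)) ∧
      ∀ v, rhoR E (alphaR α p) v ≤ (1 - γ) * (2 * ‖α‖) := by
  obtain ⟨x, hx⟩ := exists_isFixedPt_discountedInMax hin α hγ₀ hγ₁
  refine ⟨fun v => (-truncateGaps x (2 * ‖α‖)) v + Fintype.card V * (2 * ‖α‖),
    fun v => ⟨?_, ?_⟩, fun v => ?_⟩
  · simp only [Pi.neg_apply, neg_add_eq_sub, sub_nonneg]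
    exact truncateGaps_le x (by positivity) v
  · simp only [Pi.neg_apply, neg_add_eq_sub]
    exact sub_le_self _ (truncateGaps_nonneg x _ v)
  · rw [alphaR_add_const]
    exact rhoR_alphaR_neg_truncateGaps_le hx hout hin hγ₀ hγ₁ v

end Discounted

theorem rvec_le_card_mul_norm [Fintype V] [DecidableEq V] {E : V → V → Prop}
    (hout : ∀ v, ∃ w, E v w) (hin : ∀ v, ∃ u, E u v)
    (α : V → V → ℝ) (σ : ℕ → V) (t : ℕ) (v : V) :
    rvec E α σ t v ≤ Fintype.card V * (2 * ‖α‖) := by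
  set B : ℝ := Fintype.card V * (2 * ‖α‖)
  have hbound : ∀ γ ∈ Ioo (0 : ℝ) 1, rvec E α σ t v ≤ B + t * ((1 - γ) * (2 * ‖α‖) / 2) := by
    rintro γ ⟨hγ₀, hγ₁⟩
    obtain ⟨p, hp, hρ⟩ := exists_potential_rhoR_alphaR_le hout hin α hγ₀.le hγ₁
    linarith [rvec_le_add_mul_of_rhoR_alphaR_le hout hin (fun v => (hp v).1) hρ σ t v, (hp v).2]
  have hlim : Tendsto (fun γ : ℝ => B + t * ((1 - γ) * (2 * ‖α‖) / 2)) (𝓝[<] 1) (𝓝 B) :=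
    tendsto_nhdsWithin_of_tendsto_nhds (Continuous.tendsto' (by fun_prop) _ _ (by simp))
  exact ge_of_tendsto hlim (eventually_of_mem (Ioo_mem_nhdsLT one_pos) hbound)

theorem raising_vectors_monotone_bounded_converge_general
    [Fintype V] [DecidableEq V] (E : V → V → Prop)
    (hout : ∀ v, ∃ w, E v w) (hin : ∀ v, ∃ u, E u v)
    (α : V → V → ℝ) (σ : ℕ → V) :
    (∀ v, Monotone fun t => rvec E α σ t v) ∧
    (∀ t v, rvec E α σ t v ≤ Fintype.card V * (2 * ‖α‖)) ∧
    (∃ rstar : V → ℝ, ∀ v,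
      Tendsto (fun t => rvec E α σ t v) atTop (nhds (rstar v))) := by
  have hmono (v : V) : Monotone fun t => rvec E α σ t v := fun _ _ h => monotone_rvec E α σ h v
  have hbound := rvec_le_card_mul_norm hout hin α σ
  exact ⟨hmono, hbound, fun v => ⨆ t, rvec E α σ t v, fun v =>
    tendsto_atTop_ciSup (hmono v) ⟨_, forall_mem_range.2 fun t => hbound t v⟩⟩

/-- For any initial graph function and any infinite sequence of
raising operations, the raising vectors `r(t)` are coordinatewise non-decreasing and
bounded above, and hence converge to a limit vector `r*`. -/
theorem raising_vectors_monotone_bounded_converge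
    [Fintype V] [Nonempty V] [DecidableEq V] (E : V → V → Prop)
    (hout : ∀ v, ∃ w, E v w) (hin : ∀ v, ∃ u, E u v)
    (hconn : ∀ u v : V, Relation.ReflTransGen E u v)
    (α : V → V → ℝ) (σ : ℕ → V) :
    (∀ v, Monotone fun t => rvec E α σ t v) ∧
    (∃ B : ℝ, ∀ t v, rvec E α σ t v ≤ B) ∧
    (∃ rstar : V → ℝ, ∀ v,
      Tendsto (fun t => rvec E α σ t v) atTop (nhds (rstar v))) := by
  obtain ⟨hmono, hbound, hlim⟩ :=
    raising_vectors_monotone_bounded_converge_general E hout hin α σ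
  exact ⟨hmono, ⟨_, hbound⟩, hlim⟩
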